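/- arXiv:2303.03157 — 2 statements merged into one kernel-verified Lean document; each statement's English description precedes it below -/
import Mathlib

section
/- Let n ≥ 1, let F : ℝⁿ → ℝⁿ, let V : ℝⁿ → ℝ be differentiable, let α > 0 and c₂ ≥ c₁ > 0, and assume: (a) c₁ ‖y‖² ≤ V(y) ≤ c₂ ‖y‖² for all y ∈ ℝⁿ; (b) ⟪∇V(y), F(y)⟫ ≤ -α V(y) for all y ∈ ℝⁿ. Then for every differentiable x : ℝ → ℝⁿ with x'(t) = F(x(t)) for all t ≥ 0, one has ‖x(t)‖ ≤ √(c₂ / c₁) · ‖x(0)‖ · e^{-α t / 2} for all t ≥ 0; i.e., the system ẋ = F(x) is globally exponentially stable at the origin. -/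
/-!
Along a trajectory, the chain rule gives `(V ∘ x)' = ⟪∇V(x), F(x)⟫ ≤ -α (V ∘ x)`, so
`t ↦ e^{αt} V(x(t))` has nonpositive derivative and is antitone on `[0, ∞)`
(`lyapunov_exp_antitoneOn`). Hence `V(x(t)) ≤ e^{-αt} V(x(0))`, and the quadratic bounds on `V`
turn this into `‖x(t)‖² ≤ (c₂ / c₁) ‖x(0)‖² e^{-αt}`, whose square root is the claim.
-/

open RealInnerProductSpace

theorem lyapunov_exp_antitoneOn {E : Type*} [NormedAddCommGroup E] [InnerProductSpace ℝ E]
    [CompleteSpace E] {F : E → E} {V : E → ℝ} (hV : Differentiable ℝ V) {α : ℝ}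
    (hdec : ∀ y : E, ⟪gradient V y, F y⟫ ≤ -α * V y) {x : ℝ → E}
    (hx : ∀ t : ℝ, 0 ≤ t → HasDerivAt x (F (x t)) t) :
    AntitoneOn (fun t : ℝ => Real.exp (α * t) * V (x t)) (Set.Ici 0) := by
  have hderiv : ∀ t : ℝ, 0 ≤ t → HasDerivAt (fun t : ℝ => Real.exp (α * t) * V (x t))
      (Real.exp (α * t) * α * V (x t) + Real.exp (α * t) * ⟪gradient V (x t), F (x t)⟫) t := by
    intro t ht
    have hVx : HasDerivAt (fun t : ℝ => V (x t)) ⟪gradient V (x t), F (x t)⟫ t := by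
      exact (hV (x t)).hasGradientAt.hasFDerivAt.comp_hasDerivAt t (hx t ht)
    have hexp : HasDerivAt (fun t : ℝ => Real.exp (α * t)) (Real.exp (α * t) * α) t := by
      simpa using ((hasDerivAt_id t).const_mul α).exp
    exact hexp.mul hVx
  refine antitoneOn_of_hasDerivWithinAt_nonpos (convex_Ici 0)
    (fun t ht => (hderiv t ht).continuousAt.continuousWithinAt)
    (fun t ht => (hderiv t (interior_subset ht)).hasDerivWithinAt) (fun t _ => ?_)
  have h := mul_le_mul_of_nonneg_left (hdec (x t)) (Real.exp_pos (α * t)).le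
  linarith

/-- Theorem 1, part 2 of CoILS (exponential Lyapunov stability criterion): if
`c₁‖y‖² ≤ V(y) ≤ c₂‖y‖²` and `⟪∇V(y), F(y)⟫ ≤ -αV(y)` for all `y`, then every
solution of `ẋ = F(x)` satisfies `‖x(t)‖ ≤ √(c₂/c₁) ‖x(0)‖ e^{-αt/2}`. -/
theorem coils_global_exponential_stability
    (n : ℕ) (hn : 1 ≤ n)
    (F : EuclideanSpace ℝ (Fin n) → EuclideanSpace ℝ (Fin n))
    (V : EuclideanSpace ℝ (Fin n) → ℝ) (hV : Differentiable ℝ V)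
    (α c₁ c₂ : ℝ) (hα : 0 < α) (hc₁ : 0 < c₁) (hc₁₂ : c₁ ≤ c₂)
    (hlow : ∀ y : EuclideanSpace ℝ (Fin n), c₁ * ‖y‖ ^ 2 ≤ V y)
    (hupp : ∀ y : EuclideanSpace ℝ (Fin n), V y ≤ c₂ * ‖y‖ ^ 2)
    (hdec : ∀ y : EuclideanSpace ℝ (Fin n), ⟪gradient V y, F y⟫ ≤ -α * V y) :
    ∀ x : ℝ → EuclideanSpace ℝ (Fin n),
      (∀ t : ℝ, 0 ≤ t → HasDerivAt x (F (x t)) t) →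
      ∀ t : ℝ, 0 ≤ t →
        ‖x t‖ ≤ Real.sqrt (c₂ / c₁) * ‖x 0‖ * Real.exp (-α * t / 2) := by
  intro x hx t ht
  have hmono : Real.exp (α * t) * V (x t) ≤ V (x 0) := by
    simpa using lyapunov_exp_antitoneOn hV hdec hx Set.self_mem_Ici (Set.mem_Ici.mpr ht) ht
  have hsq : ‖x t‖ ^ 2 ≤ c₂ / c₁ * ‖x 0‖ ^ 2 * Real.exp (-α * t) := by
    have hVt : V (x t) ≤ V (x 0) * Real.exp (-α * t) := by
      rw [neg_mul, Real.exp_neg, ← div_eq_mul_inv, le_div_iff₀ (Real.exp_pos _), mul_comm]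
      exact hmono
    have hV0 := mul_le_mul_of_nonneg_right (hupp (x 0)) (Real.exp_pos (-α * t)).le
    calc ‖x t‖ ^ 2 ≤ c₂ * ‖x 0‖ ^ 2 * Real.exp (-α * t) / c₁ := by
          rw [le_div_iff₀ hc₁]
          linarith [hlow (x t)]
      _ = c₂ / c₁ * ‖x 0‖ ^ 2 * Real.exp (-α * t) := by ring
  refine abs_le_of_sq_le_sq' ?_ (by positivity) |>.2
  have hratio : 0 ≤ c₂ / c₁ := div_nonneg (hc₁.le.trans hc₁₂) hc₁.le
  have hexp : Real.exp (-α * t / 2) ^ 2 = Real.exp (-α * t) := by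
    rw [← Real.exp_nat_mul]
    congr 1
    push_cast
    ring
  rwa [mul_pow, mul_pow, Real.sq_sqrt hratio, hexp]
end

section
/- Let n ≥ 1, let x : ℝ → ℝⁿ be continuous, let V : ℝⁿ → ℝ satisfy V(y) ≥ ε ‖y‖² for all y with some ε > 0, let r > 0, K > 0, and suppose h := V ∘ x is differentiable on [0, ∞) with h'(t) ≤ -K for every t ≥ 0 such that ‖x(t)‖ ≥ r. Then there exists T ≥ 0 such that ‖x(T)‖ < r; i.e., the trajectory arrives at the neighborhood N_r = {y : ‖y‖ < r} of the origin. -/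
/-!
If the trajectory stayed outside the ball, the mean value inequality would give
`V (x t) ≤ V (x 0) - K * t` for all `t ≥ 0`. This is incompatible at `t = V (x 0) / K` with the
positivity of `V` away from the origin.
-/

/-- Concluding contradiction argument of Theorem 2 of CoILS: if `V(y) ≥ ε‖y‖²` and the
Lyapunov value `h = V ∘ x` decreases at rate at least `K > 0` whenever `‖x(t)‖ ≥ r`,
then the trajectory eventually enters the ball `N_r = {y : ‖y‖ < r}`. -/
theorem coils_trajectory_arrives_at_ball
    (n : ℕ) (hn : 1 ≤ n)
    (x : ℝ → EuclideanSpace ℝ (Fin n)) (hx : Continuous x)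
    (V : EuclideanSpace ℝ (Fin n) → ℝ)
    (ε : ℝ) (hε : 0 < ε)
    (hlow : ∀ y : EuclideanSpace ℝ (Fin n), ε * ‖y‖ ^ 2 ≤ V y)
    (r K : ℝ) (hr : 0 < r) (hK : 0 < K)
    (hdiff : ∀ t : ℝ, 0 ≤ t → DifferentiableAt ℝ (V ∘ x) t)
    (hdec : ∀ t : ℝ, 0 ≤ t → r ≤ ‖x t‖ → deriv (V ∘ x) t ≤ -K) :
    ∃ T : ℝ, 0 ≤ T ∧ ‖x T‖ < r := by
  by_contra! hout
  have hV0 : 0 ≤ V (x 0) := le_trans (by positivity) (hlow (x 0))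
  -- At time `V (x 0) / K` the decay at rate `K` has used up the whole initial value,
  -- so `V ≤ 0` there, against `0 < ε * ‖x‖ ^ 2 ≤ V`.
  have hT : 0 ≤ V (x 0) / K := by positivity
  have hdecay := (convex_Ici (0 : ℝ)).image_sub_le_mul_sub_of_deriv_le
    (fun t ht => (hdiff t ht).continuousAt.continuousWithinAt)
    (fun t ht => (hdiff t (interior_subset ht)).differentiableWithinAt)
    (fun t ht => hdec t (interior_subset ht) (hout t (interior_subset ht)))
    0 Set.self_mem_Ici (V (x 0) / K) hT hT
  have hcancel : -K * (V (x 0) / K - 0) = -V (x 0) := by field_simp; ring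
  rw [hcancel] at hdecay
  simp only [Function.comp_apply] at hdecay
  have hpos : 0 < ‖x (V (x 0) / K)‖ := hr.trans_le (hout _ hT)
  have hVpos : 0 < V (x (V (x 0) / K)) := lt_of_lt_of_le (by positivity) (hlow _)
  linarith
end
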